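/- Let k be a field, S and T totally ordered sets, and M a pointwise finite-dimensional, middle exact, indecomposable persistence module over S × T. Suppose there exist x ≤ x' in S and y ≤ y' in T with, setting a = (x,y), b = (x,y'), c = (x',y), Ker(M_{ba}) ∩ Ker(M_{ca}) ≠ 0. Then M ≅ k_I for a block I of type (db), i.e., I = J_S × J_T with J_S ⊆ S and J_T ⊆ T interval ideals. -/

import Mathlib

namespace PMod

variable (k : Type) [Field k]

/-- A persistence module over a preordered set `P` with values in `k`-vector spaces. -/
structure PersistenceModule (P : Type) [Preorder P] where
  V : P → Type
  [addCommGroup : ∀ x, AddCommGroup (V x)]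
  [module : ∀ x, Module k (V x)]
  map : ∀ {x y : P}, x ≤ y → (V x →ₗ[k] V y)
  map_refl : ∀ x : P, map (le_refl x) = LinearMap.id
  map_trans : ∀ {x y z : P} (hxy : x ≤ y) (hyz : y ≤ z),
      map (le_trans hxy hyz) = (map hyz).comp (map hxy)

attribute [instance] PersistenceModule.addCommGroup PersistenceModule.module

variable {k}

/-- A morphism of persistence modules. -/
structure Hom {P : Type} [Preorder P] (M N : PersistenceModule k P) where
  app : ∀ x, M.V x →ₗ[k] N.V x
  natural : ∀ {x y : P} (h : x ≤ y), (N.map h).comp (app x) = (app y).comp (M.map h)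

/-- A morphism of persistence modules is an isomorphism iff it is pointwise bijective. -/
def IsIsoHom {P : Type} [Preorder P] {M N : PersistenceModule k P} (f : Hom M N) : Prop :=
  ∀ x, Function.Bijective (f.app x)

/-- Two persistence modules are isomorphic if there is a pointwise bijective
morphism between them. -/
def Isomorphic {P : Type} [Preorder P] (M N : PersistenceModule k P) : Prop :=
  ∃ f : Hom M N, IsIsoHom f

/-- The direct sum of a family of persistence modules, taken pointwise
(`Π₀` is the finitely supported product, i.e. the direct sum). -/
noncomputable def directSum {P : Type} [Preorder P] {ι : Type}
    (N : ι → PersistenceModule k P) : PersistenceModule k P where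
  V x := Π₀ i, (N i).V x
  map {x y} h := DFinsupp.mapRange.linearMap (fun i => (N i).map h)
  map_refl x := by
    have h : (fun i => (N i).map (le_refl x)) =
        fun i => (LinearMap.id : (N i).V x →ₗ[k] (N i).V x) :=
      funext fun i => (N i).map_refl x
    rw [h]
    exact DFinsupp.mapRange.linearMap_id
  map_trans {x y z} hxy hyz := by
    have h : (fun i => (N i).map (le_trans hxy hyz)) =
        fun i => ((N i).map hyz).comp ((N i).map hxy) :=
      funext fun i => (N i).map_trans hxy hyz
    rw [h]
    exact DFinsupp.mapRange.linearMap_comp _ _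

/-- The binary direct sum of two persistence modules, taken pointwise. -/
def sum2 {P : Type} [Preorder P] (M N : PersistenceModule k P) : PersistenceModule k P where
  V x := M.V x × N.V x
  map h := (M.map h).prodMap (N.map h)
  map_refl x := by
    rw [M.map_refl, N.map_refl]
    exact LinearMap.prodMap_id
  map_trans hxy hyz := by
    rw [M.map_trans hxy hyz, N.map_trans hxy hyz]
    exact (LinearMap.prodMap_comp _ _ _ _).symm

/-- The zero persistence module predicate. -/
def IsZero {P : Type} [Preorder P] (M : PersistenceModule k P) : Prop :=
  ∀ x, ∀ v : M.V x, v = 0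

/-- A persistence module is indecomposable if it is nonzero and whenever it is
isomorphic to a direct sum of two modules, one of the summands is zero. -/
def Indecomposable {P : Type} [Preorder P] (M : PersistenceModule k P) : Prop :=
  ¬ IsZero M ∧ ∀ M' M'' : PersistenceModule k P,
    Isomorphic M (sum2 M' M'') → IsZero M' ∨ IsZero M''

variable (k)

/-- A subset of a preordered set is convex. -/
def IsConvex {P : Type} [Preorder P] (I : Set P) : Prop :=
  ∀ p q r : P, p ≤ q → q ≤ r → p ∈ I → r ∈ I → q ∈ I

open Classical in
/-- The fibre of the interval module `k_I` at `x`: a copy of `k` if `x ∈ I`, else `0`. -/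
noncomputable def kMod {P : Type} [Preorder P] (I : Set P) (x : P) : Submodule k k :=
  if x ∈ I then ⊤ else ⊥

/-- The canonical generator of the fibre of the interval module at a point of `I`. -/
noncomputable def kGen {P : Type} [Preorder P] {I : Set P} {x : P} (hx : x ∈ I) :
    kMod k I x :=
  ⟨1, by simp [kMod, hx]⟩

open Classical in
/-- The structure maps of the interval module. -/
noncomputable def intervalMap {P : Type} [Preorder P] (I : Set P) {x y : P} (_ : x ≤ y) :
    kMod k I x →ₗ[k] kMod k I y where
  toFun m := if hy : y ∈ I then ⟨(m : k), by simp [kMod, hy]⟩ else 0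
  map_add' a b := by
    by_cases hy : y ∈ I <;> simp [hy]
  map_smul' c a := by
    by_cases hy : y ∈ I <;> simp [hy]

theorem kMod_coe_eq_zero {P : Type} [Preorder P] {I : Set P} {x : P} (hx : x ∉ I)
    (m : kMod k I x) : (m : k) = 0 := by
  have hm := m.2
  simp only [kMod, if_neg hx, Submodule.mem_bot] at hm
  exact hm

/-- The interval module `k_I` of a convex subset `I ⊆ P`: one-dimensional with
identity structure maps on `I`, and zero outside of `I`. -/
noncomputable def intervalModule {P : Type} [Preorder P] (I : Set P) (hI : IsConvex I) :
    PersistenceModule k P where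
  V x := kMod k I x
  map h := intervalMap k I h
  map_refl x := by
    ext m
    by_cases hx : x ∈ I
    · simp [intervalMap, hx]
    · simp [intervalMap, hx, kMod_coe_eq_zero k hx m]
  map_trans {x y z} hxy hyz := by
    ext m
    by_cases hz : z ∈ I
    · by_cases hy : y ∈ I
      · simp [intervalMap, hz, hy]
      · have hx : x ∉ I := fun hx => hy (hI x y z hxy hyz hx hz)
        simp [intervalMap, hz, hy, kMod_coe_eq_zero k hx m]
    · by_cases hy : y ∈ I <;> simp [intervalMap, hz, hy]

/-- The constant persistence module `k_P` with value `k` everywhere. -/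
def constModule (P : Type) [Preorder P] : PersistenceModule k P where
  V _ := k
  map _ := LinearMap.id
  map_refl _ := rfl
  map_trans _ _ := rfl

variable {k}

/-- Connectedness of a subset of a preordered set: any two points are joined by
a finite zigzag of comparable points inside the subset. -/
def IsConn {P : Type} [Preorder P] (I : Set P) : Prop :=
  ∀ p ∈ I, ∀ q ∈ I, ∃ (n : ℕ) (r : ℕ → P), r 0 = p ∧ r n = q ∧ (∀ i ≤ n, r i ∈ I) ∧
    ∀ i < n, r i ≤ r (i + 1) ∨ r (i + 1) ≤ r i

/-- An interval in a poset: a nonempty convex connected subset. -/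
def IsInterval {P : Type} [Preorder P] (I : Set P) : Prop :=
  I.Nonempty ∧ IsConvex I ∧ IsConn I

/-- An ideal: a subset closed under going down. -/
def IsIdeal {P : Type} [Preorder P] (I : Set P) : Prop :=
  ∀ p q : P, p ≤ q → q ∈ I → p ∈ I

/-- A filter: a subset closed under going up. -/
def IsFilter {P : Type} [Preorder P] (I : Set P) : Prop :=
  ∀ p q : P, p ≤ q → p ∈ I → q ∈ I

/-- An interval in a totally ordered set: a nonempty convex subset. -/
def IsIntervalLin {P : Type} [Preorder P] (I : Set P) : Prop :=
  I.Nonempty ∧ IsConvex I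

theorem IsConvex.prod {S T : Type} [Preorder S] [Preorder T] {A : Set S} {B : Set T}
    (hA : IsConvex A) (hB : IsConvex B) : IsConvex (A ×ˢ B) := by
  intro p q r hpq hqr hp hr
  exact ⟨hA _ _ _ hpq.1 hqr.1 hp.1 hr.1, hB _ _ _ hpq.2 hqr.2 hp.2 hr.2⟩

theorem isConvex_univ {P : Type} [Preorder P] : IsConvex (Set.univ : Set P) :=
  fun _ _ _ _ _ _ _ => trivial

/-- A block in the product of two totally ordered sets. -/
def IsBlock {S T : Type} [LinearOrder S] [LinearOrder T] (I : Set (S × T)) : Prop :=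
  I.Nonempty ∧ (
    (∃ JS JT, IsIntervalLin JS ∧ IsIdeal JS ∧ IsIntervalLin JT ∧ IsIdeal JT ∧ I = JS ×ˢ JT) ∨
    (∃ JS JT, IsIntervalLin JS ∧ IsFilter JS ∧ IsIntervalLin JT ∧ IsFilter JT ∧ I = JS ×ˢ JT) ∨
    (∃ JS, IsIntervalLin JS ∧ I = JS ×ˢ (Set.univ : Set T)) ∨
    (∃ JT, IsIntervalLin JT ∧ I = (Set.univ : Set S) ×ˢ JT))

theorem IsBlock.isConvex {S T : Type} [LinearOrder S] [LinearOrder T] {I : Set (S × T)}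
    (h : IsBlock I) : IsConvex I := by
  obtain ⟨-, h | h | h | h⟩ := h
  · obtain ⟨JS, JT, hS, -, hT, -, rfl⟩ := h
    exact hS.2.prod hT.2
  · obtain ⟨JS, JT, hS, -, hT, -, rfl⟩ := h
    exact hS.2.prod hT.2
  · obtain ⟨JS, hS, rfl⟩ := h
    exact hS.2.prod isConvex_univ
  · obtain ⟨JT, hT, rfl⟩ := h
    exact isConvex_univ.prod hT.2

/-- Convexity is inherited by preimages in a subposet. -/
theorem IsConvex.preimage {P : Type} [Preorder P] {J : Set P} (hJ : IsConvex J)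
    (Q : Set P) : IsConvex {p : Q | (p : P) ∈ J} :=
  fun p q r hpq hqr hp hr => hJ p q r hpq hqr hp hr

/-- The restriction of a persistence module to a subposet. -/
def restrict {P : Type} [Preorder P] (M : PersistenceModule k P) (Q : Set P) :
    PersistenceModule k Q where
  V q := M.V q
  map h := M.map h
  map_refl q := M.map_refl q
  map_trans hxy hyz := M.map_trans hxy hyz

/-- Middle exactness for persistence modules over a product of two totally ordered sets:
for every rectangle `a = (x,y) ≤ b = (x,y'), c = (x',y) ≤ d = (x',y')` the sequence
`M_a → M_b ⊕ M_c → M_d` is exact at `M_b ⊕ M_c`. -/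
def MiddleExact {S T : Type} [Preorder S] [Preorder T]
    (M : PersistenceModule k (S × T)) : Prop :=
  ∀ (x x' : S) (y y' : T) (hx : x ≤ x') (hy : y ≤ y')
    (mb : M.V (x, y')) (mc : M.V (x', y)),
    M.map (show (x, y') ≤ (x', y') from ⟨hx, le_refl y'⟩) mb =
      M.map (show (x', y) ≤ (x', y') from ⟨le_refl x', hy⟩) mc →
    ∃ ma : M.V (x, y),
      M.map (show (x, y) ≤ (x, y') from ⟨le_refl x, hy⟩) ma = mb ∧
      M.map (show (x, y) ≤ (x', y) from ⟨hx, le_refl y⟩) ma = mc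


theorem IsIdeal.isConvex {P : Type} [Preorder P] {I : Set P} (h : IsIdeal I) : IsConvex I :=
  fun _ q r _ hqr _ hr => h q r hqr hr

theorem IsFilter.isConvex {P : Type} [Preorder P] {I : Set P} (h : IsFilter I) : IsConvex I :=
  fun p q _ hpq _ hp _ => h p q hpq hp


/-- Convexity of the preimage of a convex subset of `T` in a subposet of `S × T`. -/
theorem IsConvex.preimageSnd {S T : Type} [Preorder S] [Preorder T] {J : Set T}
    (hJ : IsConvex J) (Q : Set (S × T)) : IsConvex {p : ↥Q | (p : S × T).2 ∈ J} :=
  fun p q r hpq hqr hp hr =>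
    hJ _ _ _ (Subtype.coe_le_coe.mpr hpq).2 (Subtype.coe_le_coe.mpr hqr).2 hp hr

end PMod

/-!
Among the vectors at `(x, y)` killed by the two given maps, choose `m ≠ 0` in the intersection of
`L := Ker (M (x, y) → M (x, y'))` with the smallest `Ker (M (x, y) → M (s, y))` meeting `L`
nontrivially. Then every `Ker (M (x, y) → M (s, y))` not containing `m` meets `L` trivially, and
middle exactness forces `m` to survive at `(s, t)` whenever it survives at `(s, y)` and at `(x, t)`.
So the down-closure of the points where `m` survives is a product `J = J_S × J_T` of proper ideals.

Let `N ⊆ M` consist of the vectors that die at every point outside `J`. Middle exactness, with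
finite-dimensionality to pass from single points outside `J` to all of them, makes `N p → N q`
surjective for `p ≤ q ∈ J`. By linear compactness `m` then lies in a compatible family of vectors
of `N`, whose support is exactly `J`: this is a monomorphism `k_J → M`. Since `J` is directed, some
functional on `colim_J M` takes the value `1` on the class of `m`. As `J` is down-closed, it defines
a morphism `M → k_J`, which retracts the monomorphism, so `k_J` is a summand of `M`.
-/

namespace PMod

theorem exists_forall_le_of_directed {α ι : Type*} [Preorder α] [WellFoundedLT α] [Nonempty ι]
    {f : ι → α} (hf : Directed (· ≥ ·) f) : ∃ i, ∀ j, f i ≤ f j := by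
  obtain ⟨_, hmin⟩ := exists_minimal_of_wellFoundedLT (· ∈ Set.range f) (Set.range_nonempty f)
  obtain ⟨i, rfl⟩ := hmin.prop
  exact ⟨i, fun j => (Directed.directedOn_range hf).le_of_minimal hmin ⟨j, rfl⟩⟩

section Artinian

variable {R V ι : Type*} [Ring R] [AddCommGroup V] [Module R V] [IsArtinian R V] [LinearOrder ι]

theorem exists_mem_ne_zero_forall_disjoint_of_monotone {K : ι → Submodule R V} (hK : Monotone K)
    {L : Submodule R V} (hKL : ∃ i, ¬ Disjoint (K i) L) :
    ∃ m ∈ L, m ≠ 0 ∧ (∃ i, m ∈ K i) ∧ ∀ i, m ∉ K i → Disjoint (K i) L := by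
  have : Nonempty {i // ¬ Disjoint (K i) L} := nonempty_subtype.2 hKL
  have hmono : Monotone fun i : {i // ¬ Disjoint (K i) L} => K i ⊓ L :=
    fun _ _ hij => inf_le_inf_right L (hK hij)
  obtain ⟨⟨i, hi⟩, hmin⟩ := exists_forall_le_of_directed hmono.directed_ge
  obtain ⟨m, ⟨hmK, hmL⟩, hm0⟩ := Submodule.exists_mem_ne_zero_of_ne_bot (mt disjoint_iff.2 hi)
  refine ⟨m, hmL, hm0, ⟨i, hmK⟩, fun j hj => by_contra fun hjL => hj ?_⟩
  exact (hmin ⟨j, hjL⟩ ⟨hmK, hmL⟩).1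

end Artinian

namespace PersistenceModule

section Preorder

variable {k : Type} [Field k] {P : Type} [Preorder P]

theorem map_self_apply (M : PersistenceModule k P) {p : P} (h : p ≤ p) (v : M.V p) :
    M.map h v = v := by
  rw [M.map_refl, LinearMap.id_apply]

theorem map_map_apply (M : PersistenceModule k P) {p q r : P} (hpq : p ≤ q) (hqr : q ≤ r)
    (v : M.V p) : M.map hqr (M.map hpq v) = M.map (hpq.trans hqr) v := by
  rw [M.map_trans hpq hqr, LinearMap.comp_apply]

theorem map_eq_zero_of_le (M : PersistenceModule k P) {p q r : P} {hpq : p ≤ q} {hpr : p ≤ r}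
    (hqr : q ≤ r) {v : M.V p} (hv : M.map hpq v = 0) : M.map hpr v = 0 := by
  rw [← M.map_map_apply hpq hqr, hv, map_zero]

theorem monotone_ker_map (M : PersistenceModule k P) {p : P} {ι : Type*} [Preorder ι] {r : ι → P}
    (hr : Monotone r) (hp : ∀ i, p ≤ r i) : Monotone fun i => LinearMap.ker (M.map (hp i)) :=
  fun _ _ hij _ hv => M.map_eq_zero_of_le (hr hij) hv

/-- The persistence submodule of `M` with fibres `N p`. -/
def ofSubmodule (M : PersistenceModule k P) (N : ∀ p, Submodule k (M.V p))
    (hN : ∀ {p q : P} (h : p ≤ q), N p ≤ (N q).comap (M.map h)) : PersistenceModule k P where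
  V p := N p
  map h := (M.map h).restrict (hN h)
  map_refl p := LinearMap.ext fun v => Subtype.ext (M.map_self_apply le_rfl v.1)
  map_trans hpq hqr := LinearMap.ext fun v => Subtype.ext (M.map_map_apply hpq hqr v.1).symm

/-- The pointwise dual of a persistence module, over the opposite preorder. -/
noncomputable def dual (M : PersistenceModule k P) : PersistenceModule k Pᵒᵈ where
  V p := Module.Dual k (M.V (OrderDual.ofDual p))
  map h := (M.map (OrderDual.ofDual_le_ofDual.2 h)).dualMap
  map_refl _ := by
    rw [M.map_refl]
    exact LinearMap.dualMap_id
  map_trans hpq hqr := by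
    rw [M.map_trans (OrderDual.ofDual_le_ofDual.2 hqr) (OrderDual.ofDual_le_ofDual.2 hpq)]
    exact (LinearMap.dualMap_comp_dualMap _ _).symm

/-- Compatible families of vectors, that is, elements of the limit of `M`, or equivalently
morphisms from the constant module to `M`. -/
def IsSection (M : PersistenceModule k P) (e : ∀ p, M.V p) : Prop :=
  ∀ {p q : P} (h : p ≤ q), M.map h (e p) = e q

/-- Compatible families of functionals, that is, functionals on the colimit of `M`, or equivalently
morphisms from `M` to the constant module. -/
def IsCosection (M : PersistenceModule k P) (φ : ∀ p, Module.Dual k (M.V p)) : Prop :=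
  ∀ {p q : P} (h : p ≤ q) (v : M.V p), φ q (M.map h v) = φ p v

open Classical in
/-- The colimit of a persistence module, usually taken over a directed preorder. -/
noncomputable abbrev colimit (M : PersistenceModule k P) : Type :=
  Module.DirectLimit M.V fun _ _ h => M.map h

open Classical in
/-- The canonical map from a fibre of a persistence module to its colimit. -/
noncomputable abbrev toColimit (M : PersistenceModule k P) (p : P) : M.V p →ₗ[k] M.colimit :=
  Module.DirectLimit.of k P M.V (fun _ _ h => M.map h) p

theorem isCosection_comp_toColimit (M : PersistenceModule k P) (f : Module.Dual k M.colimit) :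
    M.IsCosection fun p => f ∘ₗ M.toColimit p :=
  fun _ _ => by
    classical exact congrArg f Module.DirectLimit.of_f

theorem exists_map_eq_zero_of_toColimit_eq_zero [IsDirectedOrder P] (M : PersistenceModule k P)
    {p : P} {v : M.V p} (hv : M.toColimit p v = 0) : ∃ (q : P) (h : p ≤ q), M.map h v = 0 := by
  classical
  have : DirectedSystem M.V fun _ _ h => M.map h :=
    ⟨fun _ v => M.map_self_apply le_rfl v, fun _ _ _ hij hjk v => M.map_map_apply hij hjk v⟩
  exact Module.DirectLimit.of.zero_exact hv

theorem exists_isCosection_apply_eq_one [IsDirectedOrder P] (M : PersistenceModule k P) {a : P}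
    {m : M.V a} (hm : ∀ {q : P} (h : a ≤ q), M.map h m ≠ 0) :
    ∃ φ : ∀ p, Module.Dual k (M.V p), M.IsCosection φ ∧ φ a m = 1 := by
  have hne : M.toColimit a m ≠ 0 := fun h0 =>
    let ⟨_, h, hq⟩ := M.exists_map_eq_zero_of_toColimit_eq_zero h0
    hm h hq
  obtain ⟨f, hf⟩ := Module.Projective.exists_dual_eq_one k hne
  exact ⟨_, M.isCosection_comp_toColimit f, hf⟩

theorem exists_isCosection_eq [IsDirectedOrder P] (M : PersistenceModule k P) {a : P}
    (ψ : Module.Dual k (M.V a)) (hψ : ∀ {q : P} (h : a ≤ q) (v : M.V a), M.map h v = 0 → ψ v = 0) :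
    ∃ φ : ∀ p, Module.Dual k (M.V p), M.IsCosection φ ∧ φ a = ψ := by
  have hker : ψ ∈ (LinearMap.ker (M.toColimit a)).dualAnnihilator := by
    rw [Submodule.mem_dualAnnihilator]
    intro v hv
    obtain ⟨_, h, hq⟩ := M.exists_map_eq_zero_of_toColimit_eq_zero hv
    exact hψ h v hq
  rw [← LinearMap.range_dualMap_eq_dualAnnihilator_ker] at hker
  obtain ⟨f, hf⟩ := hker
  exact ⟨_, M.isCosection_comp_toColimit f, hf⟩

theorem exists_isSection_of_isCosection_dual (M : PersistenceModule k P)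
    [∀ p, FiniteDimensional k (M.V p)] {Φ : ∀ p, Module.Dual k (M.dual.V p)}
    (hΦ : M.dual.IsCosection Φ) :
    ∃ e, M.IsSection e ∧
      ∀ p (f : Module.Dual k (M.V p)), f (e p) = Φ (OrderDual.toDual p) f := by
  let e (p : P) : M.V p := (Module.evalEquiv k (M.V p)).symm (Φ (OrderDual.toDual p))
  have he (p) (f : Module.Dual k (M.V p)) : f (e p) = Φ (OrderDual.toDual p) f :=
    Module.apply_evalEquiv_symm_apply k (M.V p) f (Φ (OrderDual.toDual p))
  refine ⟨e, fun {p q} h => (Module.evalEquiv k (M.V q)).injective (LinearMap.ext fun f => ?_), he⟩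
  calc f (M.map h (e p)) = Φ (OrderDual.toDual p) (f ∘ₗ M.map h) := he p (f ∘ₗ M.map h)
    _ = Φ (OrderDual.toDual q) f := hΦ (OrderDual.toDual_le_toDual.2 h) f
    _ = f (e q) := (he q f).symm

-- Linear compactness: dually, evaluation at `m` extends to the colimit of the directed dual system.
theorem exists_isSection_eq_of_forall_mem_range [IsCodirectedOrder P] (M : PersistenceModule k P)
    [∀ p, FiniteDimensional k (M.V p)] {a : P} {m : M.V a}
    (hm : ∀ {q : P} (h : q ≤ a), m ∈ LinearMap.range (M.map h)) :
    ∃ e, M.IsSection e ∧ e a = m := by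
  obtain ⟨Φ, hΦ, hΦa⟩ := M.dual.exists_isCosection_eq (a := OrderDual.toDual a)
    (Module.Dual.eval k (M.V a) m) (by
      intro q h f hf
      obtain ⟨w, rfl⟩ := hm (OrderDual.ofDual_le_ofDual.2 h)
      exact LinearMap.congr_fun hf w)
  obtain ⟨e, hsec, he⟩ := M.exists_isSection_of_isCosection_dual hΦ
  refine ⟨e, hsec, (Module.evalEquiv k (M.V a)).injective (LinearMap.ext fun f => ?_)⟩
  exact (he a f).trans (LinearMap.congr_fun hΦa f)

end Preorder

end PersistenceModule

section Splitting

variable {k : Type} [Field k] {P : Type} [Preorder P] {M N : PersistenceModule k P}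

theorem Hom.map_app (f : Hom M N) {p q : P} (h : p ≤ q) (v : M.V p) :
    N.map h (f.app p v) = f.app q (M.map h v) :=
  LinearMap.congr_fun (f.natural h) v

/-- The kernel of a morphism of persistence modules. -/
def Hom.ker (f : Hom M N) : PersistenceModule k P :=
  M.ofSubmodule (fun p => LinearMap.ker (f.app p)) fun h v hv => by
    rw [Submodule.mem_comap, LinearMap.mem_ker, ← f.map_app, hv, map_zero]

theorem isomorphic_sum2_ker_of_leftInverse {f : Hom M N} {g : Hom N M}
    (hfg : ∀ p, Function.LeftInverse (f.app p) (g.app p)) : Isomorphic M (sum2 N f.ker) := by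
  let π (p : P) : M.V p →ₗ[k] LinearMap.ker (f.app p) :=
    (LinearMap.id - g.app p ∘ₗ f.app p).codRestrict _ fun v => by simp [hfg p (f.app p v)]
  have hπ (p : P) (v : M.V p) : (π p v : M.V p) = v - g.app p (f.app p v) := rfl
  refine ⟨⟨fun p => (f.app p).prod (π p), fun {p q} h => LinearMap.ext fun v =>
    Prod.ext (f.map_app h v) (Subtype.ext ?_)⟩, fun p => ⟨fun v w hvw => ?_, fun ⟨n, u⟩ => ?_⟩⟩
  · change M.map h (v - g.app p (f.app p v)) = M.map h v - g.app q (f.app q (M.map h v))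
    rw [map_sub, g.map_app, f.map_app]
  · have hf : f.app p v = f.app p w := congrArg Prod.fst hvw
    have hker : (π p v : M.V p) = π p w := congrArg (Subtype.val ∘ Prod.snd) hvw
    rwa [hπ, hπ, hf, sub_left_inj] at hker
  · have hf : f.app p (g.app p n + u.1) = n := by
      rw [map_add, hfg, LinearMap.mem_ker.1 u.2, add_zero]
    refine ⟨g.app p n + u.1, Prod.ext hf (Subtype.ext ?_)⟩
    change g.app p n + u.1 - g.app p (f.app p (g.app p n + u.1)) = u.1
    rw [hf, add_sub_cancel_left]

theorem Indecomposable.isomorphic_of_sum2 {N' : PersistenceModule k P} (hM : Indecomposable M)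
    (hN : ¬ IsZero N) (h : Isomorphic M (sum2 N N')) : Isomorphic M N := by
  have hN' : IsZero N' := (hM.2 N N' h).resolve_left hN
  obtain ⟨f, hf⟩ := h
  refine ⟨⟨fun p => LinearMap.fst k _ _ ∘ₗ f.app p, fun h => LinearMap.ext fun v =>
    congrArg Prod.fst (f.map_app h v)⟩, fun p => ?_⟩
  have hfst : Function.Bijective (Prod.fst : N.V p × N'.V p → N.V p) :=
    ⟨fun v w hvw => Prod.ext hvw ((hN' p v.2).trans (hN' p w.2).symm), Prod.fst_surjective⟩
  exact hfst.comp (hf p)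

end Splitting

section IntervalSummand

variable {k : Type} [Field k] {P : Type} [Preorder P] {M : PersistenceModule k P} {J : Set P}

theorem not_isZero_intervalModule (hJ : IsConvex J) (hne : J.Nonempty) :
    ¬ IsZero (intervalModule k J hJ) := fun h0 =>
  let ⟨a, ha⟩ := hne
  one_ne_zero (congrArg Subtype.val (h0 a (kGen k ha)))

theorem intervalMap_coe {p q : P} (h : p ≤ q) (hq : q ∈ J) (c : kMod k J p) :
    (intervalMap k J h c : k) = c := by
  simp [intervalMap, hq]

/-- The morphism `k_J → M` with image spanned by a section of `M` that vanishes off `J`. -/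
noncomputable def PersistenceModule.IsSection.homOfVanishing {e : ∀ p, M.V p} (he : M.IsSection e)
    (hJ : IsConvex J) (hoff : ∀ p ∉ J, e p = 0) : Hom (intervalModule k J hJ) M where
  app p := LinearMap.toSpanSingleton k (M.V p) (e p) ∘ₗ (kMod k J p).subtype
  natural {p q} h := LinearMap.ext fun (c : kMod k J p) => by
    change M.map h ((c : k) • e p) = (intervalMap k J h c : k) • e q
    rw [map_smul, he h]
    by_cases hq : q ∈ J
    · rw [intervalMap_coe h hq]
    · rw [hoff q hq, smul_zero, smul_zero]

open Classical in
/-- A functional defined at the points of `J`, regarded as a map to the fibre of `k_J` at `p`. -/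
noncomputable def codRestrictKMod (φ : ∀ p : J, Module.Dual k (M.V p)) (p : P) :
    M.V p →ₗ[k] kMod k J p :=
  if hp : p ∈ J then (φ ⟨p, hp⟩).codRestrict (kMod k J p) fun v => by simp [kMod, hp] else 0

theorem coe_codRestrictKMod (φ : ∀ p : J, Module.Dual k (M.V p)) {p : P} (hp : p ∈ J)
    (v : M.V p) : (codRestrictKMod φ p v : k) = φ ⟨p, hp⟩ v := by
  rw [codRestrictKMod, dif_pos hp, LinearMap.codRestrict_apply]

/-- The morphism `M → k_J` induced by a cosection of `M` on a down-closed set `J`. -/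
noncomputable def PersistenceModule.IsCosection.homOfIsIdeal
    {φ : ∀ p : J, Module.Dual k (M.V p)} (hφ : (restrict M J).IsCosection φ) (hJ : IsIdeal J) :
    Hom M (intervalModule k J hJ.isConvex) where
  app p := codRestrictKMod φ p
  natural {p q} h := LinearMap.ext fun v => Subtype.ext <| by
    by_cases hq : q ∈ J
    · have hp : p ∈ J := hJ p q h hq
      calc (intervalMap k J h (codRestrictKMod φ p v) : k)
          = φ ⟨p, hp⟩ v := (intervalMap_coe h hq _).trans (coe_codRestrictKMod φ hp v)
        _ = φ ⟨q, hq⟩ (M.map h v) := (hφ (p := ⟨p, hp⟩) (q := ⟨q, hq⟩) h v).symm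
        _ = codRestrictKMod φ q (M.map h v) := (coe_codRestrictKMod φ hq _).symm
    · exact (kMod_coe_eq_zero k hq _).trans (kMod_coe_eq_zero k hq _).symm

theorem PersistenceModule.IsSection.exists_isCosection_apply_eq_one {e : ∀ p, M.V p}
    (he : M.IsSection e) (hJ : ∀ p ∈ J, e p ≠ 0) (hdir : DirectedOn (· ≤ ·) J)
    (hne : J.Nonempty) :
    ∃ φ : ∀ p : J, Module.Dual k (M.V p),
      (restrict M J).IsCosection φ ∧ ∀ p : J, φ p (e p) = 1 := by
  obtain ⟨a, ha⟩ := hne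
  have : IsDirectedOrder J := ⟨hdir.directed_val⟩
  obtain ⟨φ, hφ, hφa⟩ := (restrict M J).exists_isCosection_apply_eq_one (a := ⟨a, ha⟩) (m := e a)
    (fun {q} h => by
      change M.map h (e a) ≠ 0
      rw [he]
      exact hJ q q.2)
  have const {p q : J} (h : p ≤ q) : φ q (e q) = φ p (e p) := by
    rw [← hφ h (e p)]
    exact congrArg (φ q) (he h).symm
  refine ⟨φ, hφ, fun p => ?_⟩
  obtain ⟨r, hpr, har⟩ := exists_ge_ge p ⟨a, ha⟩
  exact (const hpr).symm.trans ((const har).trans hφa)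

theorem PersistenceModule.IsSection.exists_isomorphic_sum2_intervalModule {e : ∀ p, M.V p}
    (he : M.IsSection e) (hsupp : ∀ p, p ∈ J ↔ e p ≠ 0) (hdir : DirectedOn (· ≤ ·) J)
    (hne : J.Nonempty) (hJ : IsIdeal J) :
    ∃ N, Isomorphic M (sum2 (intervalModule k J hJ.isConvex) N) := by
  obtain ⟨φ, hφ, hφe⟩ := he.exists_isCosection_apply_eq_one (fun p => (hsupp p).1) hdir hne
  let g := he.homOfVanishing hJ.isConvex fun p hp => not_not.1 (mt (hsupp p).2 hp)
  refine ⟨_, isomorphic_sum2_ker_of_leftInverse (f := hφ.homOfIsIdeal hJ) (g := g)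
    fun p (c : kMod k J p) => Subtype.ext ?_⟩
  by_cases hp : p ∈ J
  · refine (coe_codRestrictKMod φ hp ((c : k) • e p)).trans ?_
    rw [map_smul, hφe ⟨p, hp⟩, smul_eq_mul, mul_one]
  · exact (kMod_coe_eq_zero k hp _).trans (kMod_coe_eq_zero k hp _).symm

end IntervalSummand

section Survival

variable {k : Type} [Field k] {P : Type} [Preorder P]

namespace PersistenceModule

/-- The down-closure of the set of points at which the vector `m` survives, the smallest
ideal on which a section of `M` through `m` can be supported. -/
def survivalIdeal (M : PersistenceModule k P) {a : P} (m : M.V a) : Set P :=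
  {p | ∃ (q : P) (h : a ≤ q), p ≤ q ∧ M.map h m ≠ 0}

theorem isIdeal_survivalIdeal (M : PersistenceModule k P) {a : P} (m : M.V a) :
    IsIdeal (M.survivalIdeal m) :=
  fun _ _ hpq ⟨r, h, hqr, hr⟩ => ⟨r, h, hpq.trans hqr, hr⟩

theorem mem_survivalIdeal_iff_of_le {M : PersistenceModule k P} {a p : P} {m : M.V a}
    (h : a ≤ p) : p ∈ M.survivalIdeal m ↔ M.map h m ≠ 0 :=
  ⟨fun ⟨_, _, hpq, hq⟩ hp => hq (M.map_eq_zero_of_le hpq hp), fun hp => ⟨p, h, le_rfl, hp⟩⟩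

/-- The vectors at `p` that die at every point outside `I`; together these form the largest
persistence submodule of `M` supported on `I`. -/
def deadOutside (M : PersistenceModule k P) (I : Set P) (p : P) : Submodule k (M.V p) :=
  ⨅ (q : P) (h : p ≤ q) (_ : q ∉ I), LinearMap.ker (M.map h)

theorem mem_deadOutside {M : PersistenceModule k P} {I : Set P} {p : P} {v : M.V p} :
    v ∈ M.deadOutside I p ↔ ∀ (q : P) (h : p ≤ q), q ∉ I → M.map h v = 0 := by
  simp only [deadOutside, Submodule.mem_iInf, LinearMap.mem_ker]

theorem mem_deadOutside_survivalIdeal (M : PersistenceModule k P) {a : P} (m : M.V a) :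
    m ∈ M.deadOutside (M.survivalIdeal m) a :=
  mem_deadOutside.2 fun _ h hq => not_not.1 (mt (mem_survivalIdeal_iff_of_le h).2 hq)

theorem deadOutside_le_comap_map (M : PersistenceModule k P) (I : Set P) {p q : P} (h : p ≤ q) :
    M.deadOutside I p ≤ (M.deadOutside I q).comap (M.map h) := fun v hv => by
  rw [Submodule.mem_comap, mem_deadOutside]
  intro r hqr hr
  rw [M.map_map_apply]
  exact mem_deadOutside.1 hv r _ hr

theorem eq_zero_of_mem_deadOutside {M : PersistenceModule k P} {I : Set P} {p : P} {v : M.V p}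
    (hv : v ∈ M.deadOutside I p) (hp : p ∉ I) : v = 0 := by
  rw [← M.map_self_apply le_rfl v]
  exact mem_deadOutside.1 hv p le_rfl hp

theorem survivalIdeal_eq_prod {S T : Type} [Preorder S] [Preorder T]
    {M : PersistenceModule k (S × T)} {x : S} {y : T} {m : M.V (x, y)}
    (h : ∀ {s : S} {t : T} (hs : x ≤ s) (ht : y ≤ t), M.map (Prod.mk_le_mk_iff_left.2 hs) m ≠ 0 →
      M.map (Prod.mk_le_mk_iff_right.2 ht) m ≠ 0 → M.map (Prod.mk_le_mk.2 ⟨hs, ht⟩) m ≠ 0) :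
    M.survivalIdeal m = {s | (s, y) ∈ M.survivalIdeal m} ×ˢ {t | (x, t) ∈ M.survivalIdeal m} := by
  ext ⟨s, t⟩
  constructor
  · rintro ⟨q, haq, hq, hmq⟩
    exact ⟨⟨q, haq, ⟨hq.1, haq.2⟩, hmq⟩, ⟨q, haq, ⟨haq.1, hq.2⟩, hmq⟩⟩
  · rintro ⟨⟨q, haq, hq, hmq⟩, ⟨r, har, hr, hmr⟩⟩
    refine ⟨(q.1, r.2), ⟨haq.1, har.2⟩, ⟨hq.1, hr.2⟩, h haq.1 har.2 (fun h0 => hmq ?_)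
      fun h0 => hmr ?_⟩
    · exact M.map_eq_zero_of_le (Prod.mk_le_mk.2 ⟨le_rfl, haq.2⟩ : (q.1, y) ≤ q) h0
    · exact M.map_eq_zero_of_le (Prod.mk_le_mk.2 ⟨har.1, le_rfl⟩ : (x, r.2) ≤ r) h0

end PersistenceModule

end Survival

section SemilatticeInf

variable {k : Type} [Field k] {P : Type} [SemilatticeInf P]

theorem PersistenceModule.exists_isSection_eq_of_forall_le_mem_range
    (M : PersistenceModule k P) {a : P} (hfd : ∀ p ≤ a, FiniteDimensional k (M.V p)) {m : M.V a}
    (hm : ∀ {p : P} (h : p ≤ a), m ∈ LinearMap.range (M.map h)) :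
    ∃ e, M.IsSection e ∧ e a = m := by
  have (p : Set.Iic a) : FiniteDimensional k ((restrict M (Set.Iic a)).V p) := hfd p p.2
  obtain ⟨c, hc, hca⟩ := (restrict M (Set.Iic a)).exists_isSection_eq_of_forall_mem_range
    (a := ⟨a, le_rfl⟩) (m := m) fun h => hm h
  let j (p : P) : Set.Iic a := ⟨p ⊓ a, inf_le_right⟩
  have hj : Monotone j := fun _ _ h => inf_le_inf_right a h
  refine ⟨fun p => M.map inf_le_left (c (j p)), fun {p q} h => ?_, ?_⟩
  · have hcq : M.map (hj h) (c (j p)) = c (j q) := hc (hj h)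
    calc M.map h (M.map inf_le_left (c (j p)))
        = M.map inf_le_left (M.map (hj h) (c (j p))) :=
          (M.map_map_apply _ h _).trans (M.map_map_apply (hj h) _ _).symm
      _ = M.map inf_le_left (c (j q)) := congrArg _ hcq
  · exact (hc (p := j a) (q := ⟨a, le_rfl⟩) inf_le_left).trans hca

theorem PersistenceModule.exists_isSection_support_eq_survivalIdeal (M : PersistenceModule k P)
    {a : P} (hfd : ∀ p ≤ a, FiniteDimensional k (M.V p)) {m : M.V a}
    (hm : ∀ {p : P} (h : p ≤ a), ∃ v ∈ M.deadOutside (M.survivalIdeal m) p, M.map h v = m) :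
    ∃ e, M.IsSection e ∧ ∀ p, p ∈ M.survivalIdeal m ↔ e p ≠ 0 := by
  let N := M.ofSubmodule (M.deadOutside (M.survivalIdeal m))
    (M.deadOutside_le_comap_map (M.survivalIdeal m))
  have hma := M.mem_deadOutside_survivalIdeal m
  have hfdN (p : P) (hp : p ≤ a) : FiniteDimensional k (N.V p) :=
    have := hfd p hp
    inferInstanceAs (FiniteDimensional k (M.deadOutside (M.survivalIdeal m) p))
  obtain ⟨e, he, hea⟩ := N.exists_isSection_eq_of_forall_le_mem_range hfdN (m := ⟨m, hma⟩) fun h =>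
    let ⟨v, hv, hvm⟩ := hm h
    ⟨⟨v, hv⟩, Subtype.ext hvm⟩
  have hsec : M.IsSection fun p => (e p).1 := fun h => congrArg Subtype.val (he h)
  refine ⟨_, hsec, fun p => ⟨fun ⟨q, haq, hpq, hq⟩ hp => hq ?_, fun hp => ?_⟩⟩
  · calc M.map haq m = M.map haq (e a).1 := by rw [hea]
      _ = M.map hpq (e p).1 := (hsec haq).trans (hsec hpq).symm
      _ = 0 := by rw [hp, map_zero]
  · exact not_not.1 fun hpI => hp (eq_zero_of_mem_deadOutside (e p).2 hpI)

end SemilatticeInf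

section Lattice

variable {k : Type} [Field k] {P : Type} [Lattice P]

theorem PersistenceModule.exists_map_eq_of_map_eq_of_le (M : PersistenceModule k P)
    {p q r z : P} {hpq : p ≤ q} {hpr : p ≤ r} {hqz : q ≤ z} {hrz : r ≤ z} (hqr : q ≤ r)
    (hp : q ⊓ r = p) (hz : q ⊔ r = z) {v : M.V q} {w : M.V r}
    (hvw : M.map hqz v = M.map hrz w) : ∃ u : M.V p, M.map hpq u = v ∧ M.map hpr u = w := by
  obtain rfl : p = q := hp.symm.trans (inf_eq_left.2 hqr)
  obtain rfl : z = r := hz.symm.trans (sup_eq_right.2 hqr)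
  exact ⟨v, M.map_self_apply hpq v, hvw.trans (M.map_self_apply hrz w)⟩

end Lattice

section LinearOrder

theorem IsIdeal.le_of_mem_of_notMem {S : Type} [LinearOrder S] {J : Set S} (hJ : IsIdeal J)
    {s u : S} (hs : s ∈ J) (hu : u ∉ J) : s ≤ u :=
  not_lt.1 fun hlt => hu (hJ u s hlt.le hs)

variable {k : Type} [Field k] {S T : Type} [LinearOrder S] [LinearOrder T]
  {M : PersistenceModule k (S × T)}

namespace MiddleExact

open PersistenceModule

theorem exists_map_eq_of_map_eq (hme : MiddleExact M) {p q r z : S × T} {hpq : p ≤ q}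
    {hpr : p ≤ r} {hqz : q ≤ z} {hrz : r ≤ z} (hp : q ⊓ r = p) (hz : q ⊔ r = z) {v : M.V q}
    {w : M.V r} (hvw : M.map hqz v = M.map hrz w) :
    ∃ u : M.V p, M.map hpq u = v ∧ M.map hpr u = w := by
  obtain ⟨s, t⟩ := q
  obtain ⟨s', t'⟩ := r
  rcases le_total s s' with hs | hs <;> rcases le_total t t' with ht | ht
  · exact M.exists_map_eq_of_map_eq_of_le ⟨hs, ht⟩ hp hz hvw
  · obtain rfl : p = (s, t') := hp.symm.trans (Prod.ext (inf_eq_left.2 hs) (inf_eq_right.2 ht))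
    obtain rfl : z = (s', t) := hz.symm.trans (Prod.ext (sup_eq_right.2 hs) (sup_eq_left.2 ht))
    exact hme s s' t' t hs ht v w hvw
  · obtain rfl : p = (s', t) := hp.symm.trans (Prod.ext (inf_eq_right.2 hs) (inf_eq_left.2 ht))
    obtain rfl : z = (s, t') := hz.symm.trans (Prod.ext (sup_eq_left.2 hs) (sup_eq_right.2 ht))
    exact (hme s' s t t' hs ht w v hvw.symm).imp fun _ => And.symm
  · exact (M.exists_map_eq_of_map_eq_of_le ⟨hs, ht⟩ ((inf_comm _ _).trans hp)
      ((sup_comm _ _).trans hz) hvw.symm).imp fun _ => And.symm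

theorem exists_mem_deadOutside_map_eq (hme : MiddleExact M) {I : Set (S × T)} {p q : S × T}
    (hpq : p ≤ q) [FiniteDimensional k (M.V p)] {ι : Type*} [Preorder ι] [IsCodirectedOrder ι]
    [Nonempty ι] {r : ι → S × T} (hr : Monotone r) (hinf : ∀ i, q ⊓ r i = p)
    (hsup : ∀ i, q ⊔ r i ∉ I)
    (hcover : ∀ z ∉ I, p ≤ z → q ≤ z ∨ ∃ i, r i ≤ z) {n : M.V q} (hn : n ∈ M.deadOutside I q) :
    ∃ v ∈ M.deadOutside I p, M.map hpq v = n := by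
  have hpr (i : ι) : p ≤ r i := (hinf i).symm.le.trans inf_le_right
  -- The kernels are codirected in a finite-dimensional space, so one `i` serves every `r j`.
  obtain ⟨i, hmin⟩ := exists_forall_le_of_directed (M.monotone_ker_map hr hpr).directed_ge
  have hn_sup : M.map (le_sup_left : q ≤ q ⊔ r i) n = M.map le_sup_right (0 : M.V (r i)) := by
    rw [mem_deadOutside.1 hn _ _ (hsup i), map_zero]
  obtain ⟨v, hvn, hv0⟩ :=
    hme.exists_map_eq_of_map_eq (hpq := hpq) (hpr := hpr i) (hinf i) rfl hn_sup
  refine ⟨v, mem_deadOutside.2 fun z hpz hz => ?_, hvn⟩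
  rcases hcover z hz hpz with hqz | ⟨j, hjz⟩
  · rw [← M.map_map_apply hpq hqz, hvn]
    exact mem_deadOutside.1 hn z hqz hz
  · exact M.map_eq_zero_of_le hjz (hmin j hv0)

theorem exists_mem_deadOutside_prod_map_eq_fst (hme : MiddleExact M) {JS : Set S} {JT : Set T}
    (hJS : IsIdeal JS) (hJT : IsIdeal JT) (hJT' : JT ≠ Set.univ) {s x : S} {y : T} (hs : s ≤ x)
    (hx : x ∈ JS) (hy : y ∈ JT) [FiniteDimensional k (M.V (s, y))] {n : M.V (x, y)}
    (hn : n ∈ M.deadOutside (JS ×ˢ JT) (x, y)) :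
    ∃ v ∈ M.deadOutside (JS ×ˢ JT) (s, y), M.map (Prod.mk_le_mk_iff_left.2 hs) v = n := by
  have : Nonempty ↥(JTᶜ) := (Set.nonempty_compl.2 hJT').to_subtype
  refine hme.exists_mem_deadOutside_map_eq (Prod.mk_le_mk_iff_left.2 hs)
    (r := fun u : ↥(JTᶜ) => (s, u.1))
    (fun _ _ hu => Prod.mk_le_mk_iff_right.2 hu)
    (fun u => Prod.ext (inf_eq_right.2 hs) (inf_eq_left.2 (hJT.le_of_mem_of_notMem hy u.2)))
    (fun u hmem => u.2 (hJT _ _ le_sup_right hmem.2)) (fun z hz hsz => ?_) hn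
  by_cases hzT : z.2 ∈ JT
  · exact .inl ⟨hJS.le_of_mem_of_notMem hx fun hzS => hz ⟨hzS, hzT⟩, hsz.2⟩
  · exact .inr ⟨⟨z.2, hzT⟩, hsz.1, le_rfl⟩

theorem exists_mem_deadOutside_prod_map_eq_snd (hme : MiddleExact M) {JS : Set S} {JT : Set T}
    (hJS : IsIdeal JS) (hJT : IsIdeal JT) (hJS' : JS ≠ Set.univ) {x : S} {t y : T} (ht : t ≤ y)
    (hx : x ∈ JS) (hy : y ∈ JT) [FiniteDimensional k (M.V (x, t))] {n : M.V (x, y)}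
    (hn : n ∈ M.deadOutside (JS ×ˢ JT) (x, y)) :
    ∃ v ∈ M.deadOutside (JS ×ˢ JT) (x, t), M.map (Prod.mk_le_mk_iff_right.2 ht) v = n := by
  have : Nonempty ↥(JSᶜ) := (Set.nonempty_compl.2 hJS').to_subtype
  refine hme.exists_mem_deadOutside_map_eq (Prod.mk_le_mk_iff_right.2 ht)
    (r := fun u : ↥(JSᶜ) => (u.1, t))
    (fun _ _ hu => Prod.mk_le_mk_iff_left.2 hu)
    (fun u => Prod.ext (inf_eq_left.2 (hJS.le_of_mem_of_notMem hx u.2)) (inf_eq_right.2 ht))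
    (fun u hmem => u.2 (hJS _ _ le_sup_right hmem.1)) (fun z hz htz => ?_) hn
  by_cases hzS : z.1 ∈ JS
  · exact .inl ⟨htz.1, hJT.le_of_mem_of_notMem hy fun hzT => hz ⟨hzS, hzT⟩⟩
  · exact .inr ⟨⟨z.1, hzS⟩, le_rfl, htz.2⟩

theorem exists_mem_deadOutside_prod_map_eq (hme : MiddleExact M) {JS : Set S} {JT : Set T}
    (hJS : IsIdeal JS) (hJT : IsIdeal JT) (hJS' : JS ≠ Set.univ) (hJT' : JT ≠ Set.univ)
    {p q : S × T} (hpq : p ≤ q) (hq : q ∈ JS ×ˢ JT) (hfd : ∀ r ≤ q, FiniteDimensional k (M.V r))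
    {n : M.V q} (hn : n ∈ M.deadOutside (JS ×ˢ JT) q) :
    ∃ v ∈ M.deadOutside (JS ×ˢ JT) p, M.map hpq v = n := by
  have := hfd p hpq
  have := hfd (p.1, q.2) ⟨hpq.1, le_rfl⟩
  obtain ⟨u, hu, hun⟩ := hme.exists_mem_deadOutside_prod_map_eq_fst hJS hJT hJT' hpq.1 hq.1 hq.2 hn
  obtain ⟨v, hv, hvu⟩ := hme.exists_mem_deadOutside_prod_map_eq_snd hJS hJT hJS' hpq.2
    (hJS _ _ hpq.1 hq.1) hq.2 hu
  subst hun hvu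
  exact ⟨v, hv, (M.map_map_apply _ _ v).symm⟩

theorem map_eq_zero_of_disjoint_ker (hme : MiddleExact M) {a q r r' : S × T} {haq : a ≤ q}
    {har : a ≤ r} (hrr' : r ≤ r') (hinf : q ⊓ r = a) {m : M.V a}
    (hr' : M.map (har.trans hrr') m = 0)
    (hdisj : Disjoint (LinearMap.ker (M.map haq)) (LinearMap.ker (M.map (har.trans hrr'))))
    (hsup : M.map (haq.trans le_sup_left : a ≤ q ⊔ r) m = 0) : M.map har m = 0 := by
  have hq_sup : M.map (le_sup_left : q ≤ q ⊔ r) (M.map haq m) =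
      M.map le_sup_right (0 : M.V r) := by
    rw [M.map_map_apply, hsup, map_zero]
  obtain ⟨v, hvq, hvr⟩ :=
    hme.exists_map_eq_of_map_eq (hpq := haq) (hpr := har) hinf rfl hq_sup
  have hker : m - v ∈ LinearMap.ker (M.map haq) := by
    rw [LinearMap.mem_ker, map_sub, hvq, sub_self]
  have hker' : m - v ∈ LinearMap.ker (M.map (har.trans hrr')) := by
    rw [LinearMap.mem_ker, map_sub, hr', M.map_eq_zero_of_le hrr' hvr, sub_self]
  rw [sub_eq_zero.1 (Submodule.disjoint_def.1 hdisj _ hker hker'), hvr]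

theorem exists_survivalIdeal_eq_prod (hme : MiddleExact M) {x x' : S} {y y' : T} (hx : x ≤ x')
    (hy : y ≤ y') [FiniteDimensional k (M.V (x, y))] {m₀ : M.V (x, y)} (hm₀ : m₀ ≠ 0)
    (hm₀y : M.map (Prod.mk_le_mk_iff_right.2 hy) m₀ = 0)
    (hm₀x : M.map (Prod.mk_le_mk_iff_left.2 hx) m₀ = 0) :
    ∃ (m : M.V (x, y)) (JS : Set S) (JT : Set T), M.survivalIdeal m = JS ×ˢ JT ∧
      (x ∈ JS ∧ IsIdeal JS ∧ JS ≠ Set.univ) ∧ y ∈ JT ∧ IsIdeal JT ∧ JT ≠ Set.univ := by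
  let L := LinearMap.ker (M.map (Prod.mk_le_mk_iff_right.2 hy : (x, y) ≤ (x, y')))
  have hmono : Monotone fun s : Set.Ici x => (s.1, y) :=
    fun _ _ h => Prod.mk_le_mk_iff_left.2 h
  obtain ⟨m, hmL, hm, ⟨⟨s₀, hxs₀⟩, hms₀⟩, hdisj⟩ :=
    exists_mem_ne_zero_forall_disjoint_of_monotone (L := L)
      (M.monotone_ker_map hmono fun s => Prod.mk_le_mk_iff_left.2 s.2)
      ⟨⟨x', hx⟩, fun h => hm₀ (Submodule.disjoint_def.1 h m₀ hm₀x hm₀y)⟩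
  have hmem : (x, y) ∈ M.survivalIdeal m := by
    rwa [mem_survivalIdeal_iff_of_le le_rfl, M.map_self_apply]
  have hmemS : (s₀, y) ∉ M.survivalIdeal m :=
    fun h => (mem_survivalIdeal_iff_of_le (Prod.mk_le_mk_iff_left.2 hxs₀)).1 h hms₀
  have hmemT : (x, y') ∉ M.survivalIdeal m :=
    fun h => (mem_survivalIdeal_iff_of_le (Prod.mk_le_mk_iff_right.2 hy)).1 h hmL
  have hideal := M.isIdeal_survivalIdeal m
  refine ⟨m, _, _, survivalIdeal_eq_prod fun {s t} hs ht hms hmt hmst => hmt ?_,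
    ⟨hmem, fun s s' h => hideal _ _ (Prod.mk_le_mk_iff_left.2 h), ?_⟩,
    hmem, fun t t' h => hideal _ _ (Prod.mk_le_mk_iff_right.2 h), ?_⟩
  · have hty' : t ≤ y' := by
      refine le_of_not_ge fun hy't => hmt ?_
      exact M.map_eq_zero_of_le (Prod.mk_le_mk_iff_right.2 hy't) hmL
    exact hme.map_eq_zero_of_disjoint_ker (a := (x, y)) (q := (s, y)) (r := (x, t))
      (Prod.mk_le_mk_iff_right.2 hty')
      (Prod.ext (inf_eq_right.2 hs) (inf_eq_left.2 ht)) hmL (hdisj ⟨s, hs⟩ hms)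
      (M.map_eq_zero_of_le (Prod.mk_le_mk.2 ⟨le_sup_left, le_sup_right⟩) hmst)
  · exact (Set.ne_univ_iff_exists_notMem _).2 ⟨s₀, hmemS⟩
  · exact (Set.ne_univ_iff_exists_notMem _).2 ⟨y', hmemT⟩

end MiddleExact

end LinearOrder

end PMod

open PMod in
theorem stmt13_general {k : Type} [Field k] {S T : Type} [LinearOrder S] [LinearOrder T]
    (M : PersistenceModule k (S × T)) (hme : MiddleExact M)
    (x x' : S) (hx : x ≤ x') (y y' : T) (hy : y ≤ y')
    (hfd : ∀ p ≤ (x, y), FiniteDimensional k (M.V p))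
    (hker : ∃ m : M.V (x, y), m ≠ 0 ∧
      M.map (show (x, y) ≤ (x, y') from ⟨le_refl x, hy⟩) m = 0 ∧
      M.map (show (x, y) ≤ (x', y) from ⟨hx, le_refl y⟩) m = 0) :
    ∃ (JS : Set S) (JT : Set T)
      (h : (IsIntervalLin JS ∧ IsIdeal JS) ∧ (IsIntervalLin JT ∧ IsIdeal JT))
      (N : PersistenceModule k (S × T)),
      Isomorphic M (sum2 (intervalModule k (JS ×ˢ JT) (h.1.1.2.prod h.2.1.2)) N) := by
  obtain ⟨m₀, hm₀, hm₀y, hm₀x⟩ := hker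
  have := hfd (x, y) le_rfl
  obtain ⟨m, JS, JT, hI, ⟨hxJ, hJS, hJS'⟩, hyJ, hJT, hJT'⟩ :=
    hme.exists_survivalIdeal_eq_prod hx hy hm₀ hm₀y hm₀x
  have hm : m ∈ M.deadOutside (M.survivalIdeal m) (x, y) := M.mem_deadOutside_survivalIdeal m
  obtain ⟨e, he, hsupp⟩ := M.exists_isSection_support_eq_survivalIdeal hfd fun h => by
    rw [hI] at hm ⊢
    exact hme.exists_mem_deadOutside_prod_map_eq hJS hJT hJS' hJT' h ⟨hxJ, hyJ⟩ hfd hm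
  rw [hI] at hsupp
  have hideal : IsIdeal (JS ×ˢ JT) := hI ▸ M.isIdeal_survivalIdeal m
  have hdir : DirectedOn (· ≤ ·) (JS ×ˢ JT) :=
    ((LinearOrder.supClosed JS).prod (LinearOrder.supClosed JT)).directedOn
  have hne : (JS ×ˢ JT).Nonempty := ⟨(x, y), hxJ, hyJ⟩
  obtain ⟨N, hN⟩ := he.exists_isomorphic_sum2_intervalModule hsupp hdir hne hideal
  exact ⟨JS, JT, ⟨⟨⟨⟨x, hxJ⟩, hJS.isConvex⟩, hJS⟩, ⟨⟨y, hyJ⟩, hJT.isConvex⟩, hJT⟩, N, hN⟩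

open PMod in
/-- Lemma 4.3: an indecomposable pointwise finite-dimensional middle exact module with
a nonzero common kernel element is a block module of type (db). -/
theorem stmt13 {k : Type} [Field k] {S T : Type} [LinearOrder S] [LinearOrder T]
    (M : PersistenceModule k (S × T)) (hfd : ∀ p, FiniteDimensional k (M.V p))
    (hme : MiddleExact M) (hind : Indecomposable M)
    (x x' : S) (hx : x ≤ x') (y y' : T) (hy : y ≤ y')
    (hker : ∃ m : M.V (x, y), m ≠ 0 ∧
      M.map (show (x, y) ≤ (x, y') from ⟨le_refl x, hy⟩) m = 0 ∧
      M.map (show (x, y) ≤ (x', y) from ⟨hx, le_refl y⟩) m = 0) :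
    ∃ (JS : Set S) (JT : Set T)
      (h : (IsIntervalLin JS ∧ IsIdeal JS) ∧ (IsIntervalLin JT ∧ IsIdeal JT)),
      Isomorphic M (intervalModule k (JS ×ˢ JT) (h.1.1.2.prod h.2.1.2)) := by
  obtain ⟨JS, JT, h, N, hN⟩ := stmt13_general M hme x x' hx y y' hy (fun p _ => hfd p) hker
  have hne : (JS ×ˢ JT).Nonempty := h.1.1.1.prod h.2.1.1
  exact ⟨JS, JT, h, hind.isomorphic_of_sum2 (not_isZero_intervalModule _ hne) hN⟩
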